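/- (Unified consensus error bound, fourth moment.) Under A1, A3, A4 with general constants σ₀, σ₁, and A7 with general constants σ̄₀, σ̄₁, if sup_{t≥1} γ_t ≤ ρ/c₃^{1/4} where c₃ := 864n(σ̄₁⁴ + 8L⁴), then for every t ≥ 0: E_t[‖Θ_o^{t+1}‖_F⁴] ≤ (1 − ρ/2)‖Θ_o^t‖_F⁴ + 54n²[(σ̄₀⁴ + 4ς⁴) + 8σ̄₁⁴‖θ̄^t − θ*‖⁴]·γ_{t+1}⁴/ρ³. -/

import Mathlib

open MeasureTheory Filter Matrix
open scoped BigOperators RealInnerProductSpace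

set_option linter.unusedVariables false

lemma aux_U {n : ℕ} (hn : 0 < n) (U : Matrix (Fin n) (Fin n) ℝ)
    (hUU : (1 : Matrix (Fin n) (Fin n) ℝ) - (n : ℝ)⁻¹ • Matrix.of (fun _ _ => (1 : ℝ)) = U * Uᵀ)
    (z : Fin n → ℝ) (hz : ∑ i, z i = 0) : U *ᵥ (Uᵀ *ᵥ z) = z := by
  rw [Matrix.mulVec_mulVec, ← hUU, Matrix.sub_mulVec, Matrix.one_mulVec, Matrix.smul_mulVec]
  ext i
  simp [Matrix.mulVec, dotProduct, hz]

lemma aux_Unorm {n : ℕ} (hn : 0 < n) (U : Matrix (Fin n) (Fin n) ℝ)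
    (hUU : (1 : Matrix (Fin n) (Fin n) ℝ) - (n : ℝ)⁻¹ • Matrix.of (fun _ _ => (1 : ℝ)) = U * Uᵀ)
    (z : Fin n → ℝ) (hz : ∑ i, z i = 0) : ∑ i, (Uᵀ *ᵥ z) i ^ 2 = ∑ i, z i ^ 2 := by
  have h1 : (Uᵀ *ᵥ z) ⬝ᵥ (Uᵀ *ᵥ z) = z ⬝ᵥ z := by
    conv_rhs => rw [← aux_U hn U hUU z hz]
    conv_rhs => arg 1; rw [aux_U hn U hUU z hz]
    rw [Matrix.dotProduct_mulVec z, ← Matrix.mulVec_transpose]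
  simpa [dotProduct, sq] using h1

lemma aux_W1 {n : ℕ} (hn : 0 < n) (W U : Matrix (Fin n) (Fin n) ℝ) (ρ : ℝ)
    (hWcol : ∀ j, ∑ i, W i j = 1)
    (hUU : (1 : Matrix (Fin n) (Fin n) ℝ) - (n : ℝ)⁻¹ • Matrix.of (fun _ _ => (1 : ℝ)) = U * Uᵀ)
    (hUWU : ‖LinearMap.toContinuousLinearMap (Matrix.toEuclideanLin (Uᵀ * W * U))‖ ≤ 1 - ρ)
    (z : Fin n → ℝ) (hz : ∑ i, z i = 0) :
    ∑ i, (W *ᵥ z) i ^ 2 ≤ (1 - ρ) ^ 2 * ∑ i, z i ^ 2 := by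
  have hw : ∑ i, (W *ᵥ z) i = 0 := by
    simp only [Matrix.mulVec, dotProduct]
    rw [Finset.sum_comm]
    simp only [← Finset.sum_mul, hWcol, one_mul, hz]
  rw [← aux_Unorm hn U hUU _ hw, ← aux_Unorm hn U hUU _ hz]
  have h2 : Uᵀ *ᵥ (W *ᵥ z) = (Uᵀ * W * U) *ᵥ (Uᵀ *ᵥ z) := by
    conv_lhs => rw [← aux_U hn U hUU z hz]
    simp only [Matrix.mulVec_mulVec, Matrix.mul_assoc]
  rw [h2]
  set y := Uᵀ *ᵥ z
  have h3 := (LinearMap.toContinuousLinearMap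
    (Matrix.toEuclideanLin (Uᵀ * W * U))).le_of_opNorm_le hUWU (WithLp.toLp 2 y)
  have h4 := pow_le_pow_left₀ (norm_nonneg _) h3 2
  rw [mul_pow, EuclideanSpace.norm_sq_eq, EuclideanSpace.norm_sq_eq] at h4
  simpa [Matrix.toLpLin_apply, Matrix.mul_assoc] using h4

lemma aux_W {n d : ℕ} (hn : 0 < n) (W U : Matrix (Fin n) (Fin n) ℝ) (ρ : ℝ)
    (hWcol : ∀ j, ∑ i, W i j = 1)
    (hUU : (1 : Matrix (Fin n) (Fin n) ℝ) - (n : ℝ)⁻¹ • Matrix.of (fun _ _ => (1 : ℝ)) = U * Uᵀ)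
    (hUWU : ‖LinearMap.toContinuousLinearMap (Matrix.toEuclideanLin (Uᵀ * W * U))‖ ≤ 1 - ρ)
    (x : Fin n → EuclideanSpace ℝ (Fin d)) (hx : ∑ i, x i = 0) :
    ∑ i, ‖∑ j, W i j • x j‖ ^ 2 ≤ (1 - ρ) ^ 2 * ∑ i, ‖x i‖ ^ 2 := by
  simp only [EuclideanSpace.norm_sq_eq, Real.norm_eq_abs, sq_abs]
  rw [Finset.sum_comm, Finset.sum_comm (f := fun i k => (x i).ofLp k ^ 2), Finset.mul_sum]
  refine Finset.sum_le_sum fun k _ => ?_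
  have := aux_W1 hn W U ρ hWcol hUU hUWU (fun i => x i k) (by
    have := congrArg (fun v : EuclideanSpace ℝ (Fin d) => v k) hx
    simpa using this)
  simpa [Matrix.mulVec, dotProduct] using this

lemma aux_center {n d : ℕ} (hn : 0 < n) (x : Fin n → EuclideanSpace ℝ (Fin d))
    (c : EuclideanSpace ℝ (Fin d)) :
    ∑ i, ‖x i - (n : ℝ)⁻¹ • ∑ j, x j‖ ^ 2 ≤ ∑ i, ‖x i - c‖ ^ 2 := by
  set m := (n : ℝ)⁻¹ • ∑ j, x j with hm
  have hn' : (n : ℝ) ≠ 0 := by positivity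
  have h0 : ∑ i, (x i - m) = 0 := by
    rw [Finset.sum_sub_distrib]
    simp only [Finset.sum_const, Finset.card_univ, Fintype.card_fin]
    rw [hm, ← Nat.cast_smul_eq_nsmul ℝ, smul_smul, mul_inv_cancel₀ hn', one_smul, sub_self]
  have h1 : ∀ i, ‖x i - c‖ ^ 2 = ‖x i - m‖ ^ 2 + 2 * ⟪x i - m, m - c⟫ + ‖m - c‖ ^ 2 := by
    intro i
    rw [← norm_add_sq_real, sub_add_sub_cancel]
  simp only [h1, Finset.sum_add_distrib, ← Finset.mul_sum, ← sum_inner, h0, inner_zero_left]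
  have : 0 ≤ ∑ i : Fin n, ‖m - c‖ ^ 2 := by positivity
  linarith

lemma aux_scalar (ρ γ X A L D : ℝ) (hρ0 : 0 < ρ) (hρ1 : ρ ≤ 1) :
    ((1 - ρ) * X + γ * (A + L * X + D)) ^ 4
      ≤ (1 - ρ) * X ^ 4 + γ ^ 4 / ρ ^ 3 * (27 * (A ^ 4 + L ^ 4 * X ^ 4 + D ^ 4)) := by
  have hconv : ConvexOn ℝ Set.univ (fun x : ℝ => x ^ 4) := Even.convexOn_pow (by decide)
  have h1 := hconv.2 (Set.mem_univ X) (Set.mem_univ (γ * (A + L * X + D) / ρ))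
    (sub_nonneg.2 hρ1) hρ0.le (by ring)
  simp only [smul_eq_mul] at h1
  have e1 : ρ * (γ * (A + L * X + D) / ρ) = γ * (A + L * X + D) := by field_simp
  have e2 : ρ * (γ * (A + L * X + D) / ρ) ^ 4 = γ ^ 4 / ρ ^ 3 * (A + L * X + D) ^ 4 := by
    field_simp
  rw [e1, e2] at h1
  have h2 : (A + L * X + D) ^ 4 ≤ 27 * (A ^ 4 + L ^ 4 * X ^ 4 + D ^ 4) := by
    have s : ∀ a b c : ℝ, (a + b + c) ^ 2 ≤ 3 * (a ^ 2 + b ^ 2 + c ^ 2) := by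
      intro a b c
      nlinarith [sq_nonneg (a - b), sq_nonneg (a - c), sq_nonneg (b - c)]
    have s1 := pow_le_pow_left₀ (sq_nonneg _) (s A (L * X) D) 2
    have s2 := s (A ^ 2) ((L * X) ^ 2) (D ^ 2)
    nlinarith
  have h3 : γ ^ 4 / ρ ^ 3 * (A + L * X + D) ^ 4
      ≤ γ ^ 4 / ρ ^ 3 * (27 * (A ^ 4 + L ^ 4 * X ^ 4 + D ^ 4)) :=
    mul_le_mul_of_nonneg_left h2 (by positivity)
  linarith

/-- Frobenius-type norm of a family. -/
lemma aux_piNorm {n d : ℕ} (x : Fin n → EuclideanSpace ℝ (Fin d)) :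
    ‖(WithLp.toLp 2 x : PiLp 2 (fun _ : Fin n => EuclideanSpace ℝ (Fin d)))‖ ^ 2
      = ∑ i, ‖x i‖ ^ 2 := by
  rw [PiLp.norm_sq_eq_of_L2]

set_option maxHeartbeats 1000000 in
lemma aux_point {n d : ℕ} (hn : 0 < n) (W U : Matrix (Fin n) (Fin n) ℝ) (ρ : ℝ)
    (hρ0 : 0 < ρ) (hρ1 : ρ ≤ 1)
    (hWrow : ∀ i, ∑ j, W i j = 1) (hWcol : ∀ j, ∑ i, W i j = 1)
    (hUU : (1 : Matrix (Fin n) (Fin n) ℝ) - (n : ℝ)⁻¹ • Matrix.of (fun _ _ => (1 : ℝ)) = U * Uᵀ)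
    (hUWU : ‖LinearMap.toContinuousLinearMap (Matrix.toEuclideanLin (Uᵀ * W * U))‖ ≤ 1 - ρ)
    (L ς γ : ℝ) (hL : 0 < L) (hς : 0 ≤ ς) (hγ : 0 < γ)
    (x x' g p q : Fin n → EuclideanSpace ℝ (Fin d)) (v : EuclideanSpace ℝ (Fin d))
    (hx' : ∀ i, x' i = ∑ j, W i j • x j - γ • g i)
    (m : EuclideanSpace ℝ (Fin d)) (hm : m = (n : ℝ)⁻¹ • ∑ j, x j)
    (hp : ∀ i, ‖p i - q i‖ ≤ L * ‖x i - m‖) (hq : ∀ i, ‖v - q i‖ ≤ ς) :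
    (∑ i, ‖x' i - (n : ℝ)⁻¹ • ∑ j, x' j‖ ^ 2) ^ 2
      ≤ (1 - ρ) * (∑ i, ‖x i - m‖ ^ 2) ^ 2
        + γ ^ 4 / ρ ^ 3 * (27 * (n * ∑ i, ‖g i - p i‖ ^ 4
          + L ^ 4 * (∑ i, ‖x i - m‖ ^ 2) ^ 2 + n ^ 2 * ς ^ 4)) := by
  have hn' : (n : ℝ) ≠ 0 := by positivity
  have h0 : ∑ i, (x i - m) = 0 := by
    rw [Finset.sum_sub_distrib]
    simp only [Finset.sum_const, Finset.card_univ, Fintype.card_fin]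
    rw [hm, ← Nat.cast_smul_eq_nsmul ℝ, smul_smul, mul_inv_cancel₀ hn', one_smul, sub_self]
  let F : (Fin n → EuclideanSpace ℝ (Fin d)) → PiLp 2 (fun _ : Fin n => EuclideanSpace ℝ (Fin d)) :=
    fun y => WithLp.toLp 2 y
  have hF : ∀ y, ‖F y‖ ^ 2 = ∑ i, ‖y i‖ ^ 2 := fun y => aux_piNorm y
  set X := ‖F (fun i => x i - m)‖ with hX
  have hX2 : X ^ 2 = ∑ i, ‖x i - m‖ ^ 2 := hF _
  set A := ‖F (fun i => g i - p i)‖ with hA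
  have hA2 : A ^ 2 = ∑ i, ‖g i - p i‖ ^ 2 := hF _
  set D := ‖F (fun i => q i - v)‖ with hD
  have hD2 : D ^ 2 = ∑ i, ‖q i - v‖ ^ 2 := hF _
  set B := ‖F (fun i => p i - q i)‖ with hB
  have hB2 : B ^ 2 = ∑ i, ‖p i - q i‖ ^ 2 := hF _
  set Y := ‖F (fun i => ∑ j, W i j • (x j - m))‖ with hY
  have hY2 : Y ^ 2 = ∑ i, ‖∑ j, W i j • (x j - m)‖ ^ 2 := hF _
  have hX0 : 0 ≤ X := norm_nonneg _
  have hYX : Y ≤ (1 - ρ) * X := by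
    refine le_of_sq_le_sq ?_ (mul_nonneg (by linarith) hX0)
    rw [mul_pow, hX2, hY2]
    exact aux_W hn W U ρ hWcol hUU hUWU _ h0
  have hBX : B ≤ L * X := by
    refine le_of_sq_le_sq ?_ (by positivity)
    rw [mul_pow, hX2, hB2, Finset.mul_sum]
    refine Finset.sum_le_sum fun i _ => ?_
    rw [← mul_pow]
    exact pow_le_pow_left₀ (norm_nonneg _) (hp i) 2
  have hDn : D ^ 2 ≤ n * ς ^ 2 := by
    rw [hD2]
    calc _ ≤ ∑ i : Fin n, ς ^ 2 := by
          refine Finset.sum_le_sum fun i _ => ?_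
          rw [norm_sub_rev]
          exact pow_le_pow_left₀ (norm_nonneg _) (hq i) 2
      _ = _ := by simp
  have hD4 : D ^ 4 ≤ n ^ 2 * ς ^ 4 := by
    have := pow_le_pow_left₀ (sq_nonneg _) hDn 2
    calc D ^ 4 = (D ^ 2) ^ 2 := by ring
      _ ≤ _ := this
      _ = _ := by ring
  have hA4 : A ^ 4 ≤ n * ∑ i, ‖g i - p i‖ ^ 4 := by
    have := sq_sum_le_card_mul_sum_sq (s := Finset.univ) (f := fun i => ‖g i - p i‖ ^ 2)
    rw [← hA2] at this
    simp only [← pow_mul, Finset.card_univ, Fintype.card_fin] at this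
    simpa using this
  set Z := ‖F (fun i => x' i - (m - γ • v))‖ with hZ
  have hZ2 : Z ^ 2 = ∑ i, ‖x' i - (m - γ • v)‖ ^ 2 := hF _
  have hZle : Z ≤ (1 - ρ) * X + γ * (A + L * X + D) := by
    have e : F (fun i => x' i - (m - γ • v)) = F (fun i => ∑ j, W i j • (x j - m))
        - γ • (F (fun i => g i - p i) + F (fun i => p i - q i) + F (fun i => q i - v)) := by
      ext1 i
      have : (∑ j, W i j • (x j - m)) = ∑ j, W i j • x j - m := by
        simp only [smul_sub, Finset.sum_sub_distrib, ← Finset.sum_smul, hWrow, one_smul]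
      simp only [F, PiLp.sub_apply, PiLp.smul_apply, PiLp.add_apply, this, hx']
      module
    have t1 : Z ≤ Y + γ * (A + B + D) := by
      rw [hZ, e]
      refine (norm_sub_le _ _).trans ?_
      rw [norm_smul, Real.norm_of_nonneg hγ.le]
      gcongr
      exact norm_add₃_le
    have : γ * (A + B + D) ≤ γ * (A + L * X + D) := by gcongr
    linarith
  have hZ4 := (pow_le_pow_left₀ (norm_nonneg _) hZle 4).trans
    (aux_scalar ρ γ X A L D hρ0 hρ1)
  have hc := pow_le_pow_left₀ (Finset.sum_nonneg fun i _ => sq_nonneg _)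
    (aux_center hn x' (m - γ • v)) 2
  rw [← hZ2] at hc
  rw [← hX2]
  have hlast : γ ^ 4 / ρ ^ 3 * (27 * (A ^ 4 + L ^ 4 * X ^ 4 + D ^ 4)) ≤
      γ ^ 4 / ρ ^ 3 * (27 * (n * ∑ i, ‖g i - p i‖ ^ 4 + L ^ 4 * X ^ 4 + n ^ 2 * ς ^ 4)) := by
    gcongr
  calc _ ≤ (Z ^ 2) ^ 2 := hc
    _ = Z ^ 4 := by ring
    _ ≤ _ := hZ4
    _ ≤ _ := add_le_add_right hlast ((1 - ρ) * X ^ 4)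
    _ = _ := by ring

lemma aux_coef (n : ℕ) (hn : 0 < n) (L ρ γ σ : ℝ) (hL : 0 < L) (hρ0 : 0 < ρ)
    (hγ : 0 < γ) (hσ : 0 ≤ σ) (c3 : ℝ) (hc3 : c3 = 864 * (n : ℝ) * (σ ^ 4 + 8 * L ^ 4))
    (h : γ ≤ ρ / c3 ^ ((1 : ℝ) / 4)) :
    γ ^ 4 / ρ ^ 3 * (27 * (8 * n * σ ^ 4 + L ^ 4)) ≤ ρ / 2 := by
  have hn1 : (1 : ℝ) ≤ n := by exact_mod_cast hn
  have hc : 0 < c3 := by rw [hc3]; positivity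
  have h4 : (c3 ^ ((1 : ℝ) / 4)) ^ 4 = c3 := by
    rw [← Real.rpow_natCast, ← Real.rpow_mul hc.le]; norm_num
  have h1 := pow_le_pow_left₀ hγ.le h 4
  rw [div_pow, h4, le_div_iff₀ hc] at h1
  have h2 : 27 * (8 * n * σ ^ 4 + L ^ 4) ≤ c3 / 2 := by
    rw [hc3]
    have : L ^ 4 ≤ n * L ^ 4 := le_mul_of_one_le_left (by positivity) hn1
    have h5 : 0 ≤ (n : ℝ) * σ ^ 4 := by positivity
    have h6 : 0 ≤ (n : ℝ) * L ^ 4 := by positivity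
    linarith
  rw [div_mul_eq_mul_div, div_le_iff₀ (by positivity)]
  calc _ ≤ γ ^ 4 * (c3 / 2) := by gcongr
    _ ≤ _ := by nlinarith

lemma aux_four {d : ℕ} (a b c : EuclideanSpace ℝ (Fin d)) :
    ‖a - c‖ ^ 4 ≤ 8 * (‖a - b‖ ^ 4 + ‖b - c‖ ^ 4) := by
  have h := pow_le_pow_left₀ (norm_nonneg _) (norm_sub_le_norm_sub_add_norm_sub a b c) 4
  have := add_pow_le (norm_nonneg (a - b)) (norm_nonneg (b - c)) 4
  norm_num at this
  linarith

lemma aux_sum4 {n : ℕ} (a : Fin n → ℝ) : ∑ i, a i ^ 4 ≤ (∑ i, a i ^ 2) ^ 2 := by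
  have := Finset.sum_sq_le_sq_sum_of_nonneg (s := Finset.univ) (f := fun i => a i ^ 2)
    (fun i _ => sq_nonneg _)
  simpa [← pow_mul] using this

set_option maxHeartbeats 1000000 in
theorem stmt7
    {Ω : Type*} [mΩ : MeasurableSpace Ω] (P : Measure Ω) [IsProbabilityMeasure P]
    (d n : ℕ) (hn : 0 < n)
    (fi : Fin n → EuclideanSpace ℝ (Fin d) → ℝ)
    (hfi : ∀ i, ContDiff ℝ 2 (fi i))
    (f : EuclideanSpace ℝ (Fin d) → ℝ)
    (hf : ∀ x, f x = (∑ i, fi i x) / n)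
    (L ς : ℝ) (hL : 0 < L) (hς : 0 ≤ ς)
    (hlip : ∀ i x y, ‖gradient (fi i) x - gradient (fi i) y‖ ≤ L * ‖x - y‖)
    (hhet : ∀ i x, ‖gradient f x - gradient (fi i) x‖ ≤ ς)
    (W : Matrix (Fin n) (Fin n) ℝ)
    (hWnn : ∀ i j, 0 ≤ W i j)
    (hWrow : ∀ i, ∑ j, W i j = 1) (hWcol : ∀ j, ∑ i, W i j = 1)
    (U : Matrix (Fin n) (Fin n) ℝ) (ρ : ℝ) (hρ0 : 0 < ρ) (hρ1 : ρ ≤ 1)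
    (hUU : (1 : Matrix (Fin n) (Fin n) ℝ) - (n : ℝ)⁻¹ • Matrix.of (fun _ _ => (1 : ℝ)) = U * Uᵀ)
    (hUWU : ‖LinearMap.toContinuousLinearMap (Matrix.toEuclideanLin (Uᵀ * W * U))‖ ≤ 1 - ρ)
    (γ : ℕ → ℝ) (hγpos : ∀ t, 0 < γ t)
    (θ : ℕ → Fin n → Ω → EuclideanSpace ℝ (Fin d))
    (g : ℕ → Fin n → Ω → EuclideanSpace ℝ (Fin d))
    (θ0 : Fin n → EuclideanSpace ℝ (Fin d)) (hθ0 : ∀ i ω, θ 0 i ω = θ0 i)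
    (hrec : ∀ t i ω, θ (t + 1) i ω = ∑ j, W i j • θ t j ω - γ (t + 1) • g t i ω)
    (θb : ℕ → Ω → EuclideanSpace ℝ (Fin d))
    (hθb : ∀ t ω, θb t ω = (n : ℝ)⁻¹ • ∑ i, θ t i ω)
    (C : ℕ → Ω → ℝ)
    (hC : ∀ t ω, C t ω = ∑ i, ‖θ t i ω - θb t ω‖ ^ 2)
    (ℱ : ℕ → MeasurableSpace Ω) (hℱ : ∀ t, ℱ t ≤ mΩ)
    (hadapt : ∀ t i, StronglyMeasurable[ℱ t] (θ t i))
    (hgmeas : ∀ t i, StronglyMeasurable (g t i))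
    (hgL2 : ∀ t i, Integrable (fun ω => ‖g t i ω‖ ^ 2) P)
    (θstar : EuclideanSpace ℝ (Fin d)) (hmin : ∀ x, f θstar ≤ f x)
    (σ0 σ1 : ℝ) (hσ0 : 0 ≤ σ0) (hσ1 : 0 ≤ σ1)
    (hunb : ∀ t i, P[(fun ω => g t i ω) | ℱ t] =ᵐ[P] fun ω => gradient (fi i) (θ t i ω))
    (hvar : ∀ t i, P[(fun ω => ‖g t i ω - gradient (fi i) (θ t i ω)‖ ^ 2) | ℱ t]
        ≤ᵐ[P] fun ω => σ0 ^ 2 + σ1 ^ 2 * ‖θ t i ω - θstar‖ ^ 2)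
    (σb0 σb1 : ℝ) (hσb0 : 0 ≤ σb0) (hσb1 : 0 ≤ σb1)
    (hgL4 : ∀ t i, Integrable (fun ω => ‖g t i ω‖ ^ 4) P)
    (hvar4 : ∀ t i, P[(fun ω => ‖g t i ω - gradient (fi i) (θ t i ω)‖ ^ 4) | ℱ t]
        ≤ᵐ[P] fun ω => σb0 ^ 4 + σb1 ^ 4 * ‖θ t i ω - θstar‖ ^ 4)
    (c3 : ℝ) (hc3 : c3 = 864 * (n : ℝ) * (σb1 ^ 4 + 8 * L ^ 4))
    (hstep : ∀ t : ℕ, 1 ≤ t → γ t ≤ ρ / c3 ^ ((1 : ℝ) / 4)) :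
    ∀ t : ℕ, P[(fun ω => (C (t + 1) ω) ^ 2) | ℱ t] ≤ᵐ[P]
      fun ω => (1 - ρ / 2) * (C t ω) ^ 2
        + 54 * (n : ℝ) ^ 2 * ((σb0 ^ 4 + 4 * ς ^ 4) + 8 * σb1 ^ 4 * ‖θb t ω - θstar‖ ^ 4)
          * γ (t + 1) ^ 4 / ρ ^ 3 := by
  have hcont : ∀ i, Continuous (gradient (fi i)) := by
    intro i
    have : LipschitzWith L.toNNReal (gradient (fi i)) := by
      refine LipschitzWith.of_dist_le_mul fun x y => ?_
      rw [dist_eq_norm, dist_eq_norm, Real.coe_toNNReal _ hL.le]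
      exact hlip i x y
    exact this.continuous
  have memLp_iff : ∀ h : Ω → EuclideanSpace ℝ (Fin d), AEStronglyMeasurable h P →
      (MemLp h 4 P ↔ Integrable (fun ω => ‖h ω‖ ^ 4) P) := by
    intro h hh
    have := integrable_norm_rpow_iff (p := 4) hh (by norm_num) (by norm_num)
    rw [← this]
    norm_num
  have hgM : ∀ t i, MemLp (g t i) 4 P := fun t i =>
    (memLp_iff _ (hgmeas t i).aestronglyMeasurable).2 (hgL4 t i)
  have hθM : ∀ t i, MemLp (θ t i) 4 P := by
    intro t
    induction t with
    | zero =>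
      intro i
      have : θ 0 i = fun _ => θ0 i := funext (hθ0 i)
      rw [this]
      exact memLp_const _
    | succ t ih =>
      intro i
      have : θ (t + 1) i = fun ω => ∑ j, W i j • θ t j ω - γ (t + 1) • g t i ω :=
        funext (hrec t i)
      rw [this]
      exact (memLp_finsetSum _ fun j _ => (ih j).const_smul (W i j)).sub
        ((hgM t i).const_smul (γ (t + 1)))
  have hθm : ∀ t i, StronglyMeasurable (θ t i) := fun t i => (hadapt t i).mono (hℱ t)
  have hpM : ∀ t i, MemLp (fun ω => gradient (fi i) (θ t i ω)) 4 P := by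
    intro t i
    have hb : MemLp (fun ω => L * ‖θ t i ω‖ + ‖gradient (fi i) 0‖) 4 P :=
      ((hθM t i).norm.const_mul L).add (memLp_const _)
    refine hb.of_le ((hcont i).comp_stronglyMeasurable (hθm t i)).aestronglyMeasurable ?_
    refine Eventually.of_forall fun ω => ?_
    have h1 := hlip i (θ t i ω) 0
    rw [sub_zero] at h1
    have h2 := norm_le_norm_sub_add (gradient (fi i) (θ t i ω)) (gradient (fi i) 0)
    exact (by linarith : _ ≤ L * ‖θ t i ω‖ + ‖gradient (fi i) 0‖).trans (le_abs_self _)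
  have hnoise : ∀ t i, Integrable (fun ω => ‖g t i ω - gradient (fi i) (θ t i ω)‖ ^ 4) P := by
    intro t i
    have := (hgM t i).sub (hpM t i)
    exact (memLp_iff _ this.aestronglyMeasurable).1 this
  intro t
  have hbarm : StronglyMeasurable[ℱ t] (θb t) := by
    have : θb t = fun ω => (n : ℝ)⁻¹ • ∑ i, θ t i ω := funext (hθb t)
    rw [this]
    exact (Finset.stronglyMeasurable_fun_sum _ fun i _ => hadapt t i).const_smul (n : ℝ)⁻¹
  have hbarM : MemLp (θb t) 4 P := by
    have : θb t = fun ω => (n : ℝ)⁻¹ • ∑ i, θ t i ω := funext (hθb t)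
    rw [this]
    exact (memLp_finsetSum _ fun i _ => hθM t i).const_smul (n : ℝ)⁻¹
  have hCm : StronglyMeasurable[ℱ t] (C t) := by
    have : C t = fun ω => ∑ i, ‖θ t i ω - θb t ω‖ ^ 2 := funext (hC t)
    rw [this]
    exact Finset.stronglyMeasurable_fun_sum _ fun i _ => (((hadapt t i).sub hbarm).norm).pow 2
  have hCle : ∀ ω, (C t ω) ^ 2 ≤ n * ∑ i, ‖θ t i ω - θb t ω‖ ^ 4 := by
    intro ω
    have := sq_sum_le_card_mul_sum_sq (s := Finset.univ) (f := fun i => ‖θ t i ω - θb t ω‖ ^ 2)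
    rw [hC]
    simpa [← pow_mul] using this
  have hCi : Integrable (fun ω => (C t ω) ^ 2) P := by
    have hb : Integrable (fun ω => n * ∑ i, ‖θ t i ω - θb t ω‖ ^ 4) P := by
      refine (integrable_finsetSum _ fun i _ => ?_).const_mul _
      have := (hθM t i).sub hbarM
      exact (memLp_iff _ this.aestronglyMeasurable).1 this
    refine hb.mono' ((hCm.pow 2).mono (hℱ t)).aestronglyMeasurable ?_
    refine Eventually.of_forall fun ω => ?_
    rw [Real.norm_of_nonneg (sq_nonneg _)]
    exact hCle ω
  set K : ℝ := γ (t + 1) ^ 4 / ρ ^ 3 with hK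
  have hγt := hγpos (t + 1)
  have hK0 : 0 ≤ K := by positivity
  let H : Ω → ℝ := fun ω => (1 - ρ + 27 * K * L ^ 4) * (C t ω) ^ 2 + 27 * K * n ^ 2 * ς ^ 4
  have hHm : StronglyMeasurable[ℱ t] H :=
    ((hCm.pow 2).const_mul _).add stronglyMeasurable_const
  have hHi : Integrable H P := (hCi.const_mul _).add (integrable_const _)
  let N : Fin n → Ω → ℝ := fun i ω => ‖g t i ω - gradient (fi i) (θ t i ω)‖ ^ 4
  have hSi : Integrable (∑ i, N i) P := integrable_finsetSum' _ fun i _ => hnoise t i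
  have hpt : ∀ ω, (C (t + 1) ω) ^ 2 ≤ (H + (27 * K * n) • ∑ i, N i) ω := by
    intro ω
    have := aux_point hn W U ρ hρ0 hρ1 hWrow hWcol hUU hUWU L ς (γ (t + 1)) hL hς hγt
      (fun i => θ t i ω) (fun i => θ (t + 1) i ω) (fun i => g t i ω)
      (fun i => gradient (fi i) (θ t i ω)) (fun i => gradient (fi i) (θb t ω))
      (gradient f (θb t ω)) (fun i => hrec t i ω) (θb t ω) (hθb t ω)
      (fun i => hlip i _ _) (fun i => hhet i _)
    rw [hC, hθb]
    refine this.trans (le_of_eq ?_)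
    simp only [Pi.add_apply, Pi.smul_apply, smul_eq_mul, Finset.sum_apply, H, N, hC t ω, ← hK]
    ring
  have hRi : Integrable (H + (27 * K * n) • ∑ i, N i) P := hHi.add (hSi.smul _)
  have hbar1m : StronglyMeasurable (C (t + 1)) := by
    have : C (t + 1) = fun ω => ∑ i, ‖θ (t + 1) i ω - (n : ℝ)⁻¹ • ∑ j, θ (t + 1) j ω‖ ^ 2 := by
      funext ω; rw [hC, hθb]
    rw [this]
    exact Finset.stronglyMeasurable_fun_sum _ fun i _ => (((hθm (t + 1) i).sub
      ((Finset.stronglyMeasurable_fun_sum _ fun j _ => hθm (t + 1) j).const_smul (n : ℝ)⁻¹)).norm).pow 2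
  have hC1i : Integrable (fun ω => (C (t + 1) ω) ^ 2) P := by
    refine hRi.mono' (hbar1m.pow 2).aestronglyMeasurable (Eventually.of_forall fun ω => ?_)
    rw [Real.norm_of_nonneg (sq_nonneg _)]
    exact hpt ω
  have e1 := condExp_mono (m := ℱ t) hC1i hRi (Eventually.of_forall hpt)
  have e2 := condExp_add hHi (hSi.smul (27 * K * n)) (ℱ t)
  have e3 := condExp_smul (μ := P) (27 * K * n : ℝ) (∑ i, N i) (ℱ t)
  have e4 := condExp_finsetSum (s := Finset.univ) (fun i _ => hnoise t i : ∀ i ∈ Finset.univ, Integrable (N i) P) (ℱ t)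
  have e5 : P[H | ℱ t] = H := condExp_of_stronglyMeasurable (hℱ t) hHm hHi
  have e6 : ∀ᵐ ω ∂P, ∀ i, P[N i | ℱ t] ω ≤ σb0 ^ 4 + σb1 ^ 4 * ‖θ t i ω - θstar‖ ^ 4 :=
    ae_all_iff.2 fun i => hvar4 t i
  filter_upwards [e1, e2, e3, e4, e6] with ω h1 h2 h3 h4 h6
  refine h1.trans ?_
  rw [h2, Pi.add_apply, h3, e5, Pi.smul_apply, h4, Finset.sum_apply, smul_eq_mul]
  set R := ‖θb t ω - θstar‖ ^ 4 with hR
  have hR0 : 0 ≤ R := by positivity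
  have hsum : ∑ i, P[N i | ℱ t] ω ≤ n * σb0 ^ 4 + 8 * σb1 ^ 4 * (C t ω) ^ 2
      + 8 * n * σb1 ^ 4 * R := by
    calc _ ≤ ∑ i, (σb0 ^ 4 + σb1 ^ 4 * (8 * (‖θ t i ω - θb t ω‖ ^ 4 + R))) := by
          refine Finset.sum_le_sum fun i _ => (h6 i).trans ?_
          have := aux_four (θ t i ω) (θb t ω) θstar
          gcongr
      _ = n * σb0 ^ 4 + 8 * σb1 ^ 4 * (∑ i, ‖θ t i ω - θb t ω‖ ^ 4) + 8 * n * σb1 ^ 4 * R := by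
          simp only [Finset.sum_add_distrib, ← Finset.mul_sum, Finset.sum_const, Finset.card_univ,
            Fintype.card_fin, nsmul_eq_mul]
          ring
      _ ≤ _ := by
          have := aux_sum4 (fun i => ‖θ t i ω - θb t ω‖)
          rw [hC t ω]
          gcongr
  have hcoef := aux_coef n hn L ρ (γ (t + 1)) σb1 hL hρ0 hγt hσb1 c3 hc3
    (hstep (t + 1) (by omega))
  rw [← hK] at hcoef
  have hcoef2 := mul_le_mul_of_nonneg_right hcoef (sq_nonneg (C t ω))
  have hsum2 : 27 * K * n * (∑ i, P[N i | ℱ t] ω) ≤ 27 * K * n * (n * σb0 ^ 4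
      + 8 * σb1 ^ 4 * (C t ω) ^ 2 + 8 * n * σb1 ^ 4 * R) := by gcongr
  have hfin : 54 * (n : ℝ) ^ 2 * ((σb0 ^ 4 + 4 * ς ^ 4) + 8 * σb1 ^ 4 * R) * γ (t + 1) ^ 4 / ρ ^ 3
      = 54 * n ^ 2 * K * σb0 ^ 4 + 216 * n ^ 2 * K * ς ^ 4 + 432 * n ^ 2 * K * σb1 ^ 4 * R := by
    rw [hK]; ring
  rw [hfin]
  have p1 : 0 ≤ n ^ 2 * K * σb0 ^ 4 := by positivity
  have p2 : 0 ≤ n ^ 2 * K * ς ^ 4 := by positivity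
  have p3 : 0 ≤ n ^ 2 * K * σb1 ^ 4 * R := by positivity
  simp only [H]
  nlinarith
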